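/- Let 0 < s < 1, ε > 0 and κ ∈ [0, 1]. There exists a constant C > 0, depending only on s and ε, such that for all δ > 0, T > 0, η ∈ ℝ³, t ∈ [0, T], and all ξ, ξ★ ∈ ℝ³ with ⟨ξ★⟩ ≤ |ξ|/2: |M(t, ξ) − M(t, ξ − ξ★)| ≤ C (⟨ξ★⟩/⟨ξ⟩)^κ M(t, ξ − ξ★). -/

import Mathlib

open MeasureTheory

/-- The symbol `M(t,ξ) = (1 + δ ∫₀^{T−t} ⟨ξ − τη⟩^{2s} dτ)^{−1/2−ε}`. -/
noncomputable def symbM (s ε δ T : ℝ) (η : EuclideanSpace ℝ (Fin 3)) (t : ℝ)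
    (ξ : EuclideanSpace ℝ (Fin 3)) : ℝ :=
  (1 + δ * ∫ τ in (0 : ℝ)..(T - t), Real.sqrt (1 + ‖ξ - τ • η‖ ^ 2) ^ (2 * s)) ^
    (-(1 / 2 : ℝ) - ε)

/-!
Put `N = max ‖ξ‖ (L‖η‖)` with `L = T - t`. For some `c ∈ [0, L]` one has `‖ξ - τη‖ ≥ N|τ - c|/L` on
all of `[0, L]`, so the explicit value of `∫ |τ - c|^r` shows that `∫ ⟨ξ - τη⟩^a` is at least a
multiple of `L N^a`, and that `∫ ⟨ξ - τη⟩^r` is at most a multiple of `L N^r` when `-1 < r ≤ 0`.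
Shifting `ξ` by `ζ` changes `⟨ξ - τη⟩^a` by at most a multiple of
`‖ζ‖ N^(a-b) ⟨ξ - τη⟩^(b-1)` with `b = min a 1`; since `b - 1 > -1`, the integral changes by at most
a multiple of `‖ζ‖ L N^(a-1)`, a relative error of order `⟨ζ⟩ / N ≲ ⟨ζ⟩ / ⟨ξ⟩`. A nonpositive power
of `1 + δ ∫` inherits this relative error.
-/

open Set

section RealPowers

variable {a b p x y : ℝ}

theorem abs_rpow_sub_rpow_le (ha : 0 ≤ a) (hx : 0 < x) (hy : 0 < y) :
    |x ^ a - y ^ a| ≤ max 1 a * |x - y| * max x y ^ (a - 1) := by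
  wlog hyx : y ≤ x generalizing x y
  · simpa only [abs_sub_comm, max_comm] using this hy hx (le_of_not_ge hyx)
  have hpow : y ^ a ≤ x ^ a := Real.rpow_le_rpow hy.le hyx ha
  have hratio : 0 < y / x := by positivity
  have hratio_le : y / x ≤ 1 := (div_le_one hx).2 hyx
  have bernoulli : 1 - (y / x) ^ a ≤ max 1 a * (1 - y / x) := by
    rcases le_total a 1 with h | h
    · have := Real.rpow_le_rpow_of_exponent_ge hratio hratio_le h
      rw [Real.rpow_one] at this
      rw [max_eq_left h]
      linarith
    · have := one_add_mul_self_le_rpow_one_add (s := y / x - 1) (by linarith) h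
      rw [add_sub_cancel] at this
      rw [max_eq_right h]
      linarith
  rw [max_eq_left hyx, abs_of_nonneg (sub_nonneg.2 hpow), abs_of_nonneg (sub_nonneg.2 hyx)]
  calc x ^ a - y ^ a = x ^ a * (1 - (y / x) ^ a) := by
        rw [Real.div_rpow hy.le hx.le]; field_simp
    _ ≤ x ^ a * (max 1 a * (1 - y / x)) := by gcongr
    _ = max 1 a * (x - y) * x ^ (a - 1) := by rw [Real.rpow_sub_one hx.ne']; field_simp

theorem abs_rpow_sub_rpow_le_of_le {Z : ℝ} (ha : 0 ≤ a) (hba : b ≤ a) (hb : b ≤ 1)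
    (hx : 0 < x) (hy : 0 < y) (hxZ : x ≤ Z) (hyZ : y ≤ Z) :
    |x ^ a - y ^ a| ≤ max 1 a * |x - y| * (Z ^ (a - b) * y ^ (b - 1)) := by
  have hmax : 0 < max x y := hx.trans_le (le_max_left x y)
  refine (abs_rpow_sub_rpow_le ha hx hy).trans ?_
  gcongr
  calc max x y ^ (a - 1) = max x y ^ (a - b) * max x y ^ (b - 1) := by
        rw [← Real.rpow_add hmax, sub_add_sub_cancel]
    _ ≤ Z ^ (a - b) * y ^ (b - 1) := by
        refine mul_le_mul ?_ ?_ (by positivity) (Real.rpow_nonneg (hx.le.trans hxZ) _)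
        · exact Real.rpow_le_rpow hmax.le (max_le hxZ hyZ) (sub_nonneg.2 hba)
        · exact Real.rpow_le_rpow_of_nonpos hy (le_max_right x y) (sub_nonpos.2 hb)

theorem abs_rpow_neg_sub_rpow_neg_le {B : ℝ} (hp : 0 ≤ p) (hx : 0 < x) (hy : 0 < y) (hB : 1 ≤ B)
    (hyx : y ≤ B * x) :
    |x ^ (-p) - y ^ (-p)| ≤ max 1 p * B ^ p * (|y - x| / x) * y ^ (-p) := by
  have hmax : 0 < max y x := hx.trans_le (le_max_right y x)
  have hmax_le : max y x ≤ B * x := max_le hyx (le_mul_of_one_le_left hx.le hB)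
  have hpow : max y x ^ (p - 1) ≤ B ^ p * x ^ p / x := by
    rw [Real.rpow_sub_one hmax.ne', ← Real.mul_rpow (by linarith) hx.le]
    gcongr
    exact le_max_right y x
  calc |x ^ (-p) - y ^ (-p)| = |y ^ p - x ^ p| * (x ^ (-p) * y ^ (-p)) := by
        have hfactor : x ^ (-p) - y ^ (-p) = (y ^ p - x ^ p) * (x ^ (-p) * y ^ (-p)) := by
          rw [Real.rpow_neg hx.le, Real.rpow_neg hy.le]; field_simp
        rw [hfactor, abs_mul, abs_of_pos (by positivity : 0 < x ^ (-p) * y ^ (-p))]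
    _ ≤ max 1 p * |y - x| * (B ^ p * x ^ p / x) * (x ^ (-p) * y ^ (-p)) := by
        gcongr
        exact (abs_rpow_sub_rpow_le hp hy hx).trans (by gcongr)
    _ = max 1 p * B ^ p * (|y - x| / x) * y ^ (-p) := by
        rw [Real.rpow_neg hx.le]; field_simp

end RealPowers

section PowerIntegrals

variable {a b c r : ℝ}

theorem intervalIntegrable_abs_sub_rpow (hr : -1 < r) (hc : c ∈ Icc a b) :
    IntervalIntegrable (fun τ ↦ |τ - c| ^ r) volume a b := by
  have left : IntervalIntegrable (fun τ ↦ (c - τ) ^ r) volume a c := by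
    simpa using
      (intervalIntegral.intervalIntegrable_rpow' (a := c - a) (b := 0) hr).comp_sub_left c
  have right : IntervalIntegrable (fun τ ↦ (τ - c) ^ r) volume c b := by
    simpa using
      (intervalIntegral.intervalIntegrable_rpow' (a := 0) (b := b - c) hr).comp_sub_right c
  refine (left.congr fun τ hτ ↦ ?_).trans (right.congr fun τ hτ ↦ ?_)
  · rw [uIoc_of_le hc.1] at hτ
    simp only [abs_of_nonpos (sub_nonpos.2 hτ.2), neg_sub]
  · rw [uIoc_of_le hc.2] at hτ
    simp only [abs_of_nonneg (sub_nonneg.2 hτ.1.le)]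

theorem integral_abs_sub_rpow (hr : -1 < r) (hc : c ∈ Icc a b) :
    ∫ τ in a..b, |τ - c| ^ r = ((c - a) ^ (r + 1) + (b - c) ^ (r + 1)) / (r + 1) := by
  have hr' : r + 1 ≠ 0 := by linarith
  have left : ∫ τ in a..c, |τ - c| ^ r = (c - a) ^ (r + 1) / (r + 1) := by
    calc ∫ τ in a..c, |τ - c| ^ r = ∫ τ in a..c, (c - τ) ^ r := by
          refine intervalIntegral.integral_congr fun τ hτ ↦ ?_
          rw [uIcc_of_le hc.1] at hτ
          simp only [abs_of_nonpos (sub_nonpos.2 hτ.2), neg_sub]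
      _ = (c - a) ^ (r + 1) / (r + 1) := by
          rw [intervalIntegral.integral_comp_sub_left (fun u ↦ u ^ r), integral_rpow (.inl hr),
            sub_self, Real.zero_rpow hr', sub_zero]
  have right : ∫ τ in c..b, |τ - c| ^ r = (b - c) ^ (r + 1) / (r + 1) := by
    calc ∫ τ in c..b, |τ - c| ^ r = ∫ τ in c..b, (τ - c) ^ r := by
          refine intervalIntegral.integral_congr fun τ hτ ↦ ?_
          rw [uIcc_of_le hc.2] at hτ
          simp only [abs_of_nonneg (sub_nonneg.2 hτ.1)]
      _ = (b - c) ^ (r + 1) / (r + 1) := by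
          rw [intervalIntegral.integral_comp_sub_right (fun u ↦ u ^ r), integral_rpow (.inl hr),
            sub_self, Real.zero_rpow hr', sub_zero]
  rw [← intervalIntegral.integral_add_adjacent_intervals
    (intervalIntegrable_abs_sub_rpow hr (right_mem_Icc.2 hc.1))
    (intervalIntegrable_abs_sub_rpow hr (left_mem_Icc.2 hc.2)), left, right, add_div]

theorem le_integral_abs_sub_rpow (hr : 0 ≤ r) (hc : c ∈ Icc a b) :
    ((b - a) / 2) ^ (r + 1) / (r + 1) ≤ ∫ τ in a..b, |τ - c| ^ r := by
  obtain ⟨hac, hcb⟩ := hc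
  have hab : 0 ≤ (b - a) / 2 := by linarith
  have hleft : 0 ≤ (c - a) ^ (r + 1) := Real.rpow_nonneg (by linarith) _
  have hright : 0 ≤ (b - c) ^ (r + 1) := Real.rpow_nonneg (by linarith) _
  rw [integral_abs_sub_rpow (by linarith) ⟨hac, hcb⟩]
  gcongr
  rcases le_total ((b - a) / 2) (c - a) with h | h
  · linarith [Real.rpow_le_rpow hab h (by linarith : 0 ≤ r + 1)]
  · linarith [Real.rpow_le_rpow hab (by linarith : (b - a) / 2 ≤ b - c) (by linarith : 0 ≤ r + 1)]

theorem integral_abs_sub_rpow_le (hr : -1 < r) (hc : c ∈ Icc a b) :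
    ∫ τ in a..b, |τ - c| ^ r ≤ 2 / (r + 1) * (b - a) ^ (r + 1) := by
  obtain ⟨hac, hcb⟩ := hc
  have hr' : 0 < r + 1 := by linarith
  rw [integral_abs_sub_rpow hr ⟨hac, hcb⟩, div_mul_eq_mul_div, two_mul]
  gcongr

end PowerIntegrals

section JapaneseBracket

variable {E : Type*} [NormedAddCommGroup E]

/-- The Japanese bracket `⟨v⟩ = (1 + ‖v‖²)^{1/2}`. -/
noncomputable def japaneseBracket (v : E) : ℝ :=
  √(1 + ‖v‖ ^ 2)

theorem one_le_japaneseBracket (v : E) : 1 ≤ japaneseBracket v :=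
  Real.one_le_sqrt.2 (by nlinarith [sq_nonneg ‖v‖])

theorem japaneseBracket_pos (v : E) : 0 < japaneseBracket v :=
  zero_lt_one.trans_le (one_le_japaneseBracket v)

theorem norm_le_japaneseBracket (v : E) : ‖v‖ ≤ japaneseBracket v :=
  Real.le_sqrt_of_sq_le (by linarith)

theorem japaneseBracket_le (v : E) : japaneseBracket v ≤ 1 + ‖v‖ :=
  sqrt_one_add_norm_sq_le v

theorem abs_japaneseBracket_sub_le (v w : E) :
    |japaneseBracket v - japaneseBracket w| ≤ ‖v - w‖ := by
  have hnorm (u : E) : japaneseBracket u = ‖WithLp.toLp 2 ((1 : ℝ), u)‖ := by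
    simp [WithLp.prod_norm_eq_of_L2, japaneseBracket]
  have hsub : WithLp.toLp 2 ((1 : ℝ), v) - WithLp.toLp 2 ((1 : ℝ), w)
      = WithLp.toLp 2 ((0 : ℝ), v - w) := by
    rw [← WithLp.toLp_sub, Prod.mk_sub_mk, sub_self]
  rw [hnorm, hnorm, ← WithLp.norm_toLp_snd 2 ℝ E (v - w), ← hsub]
  exact abs_norm_sub_norm_le _ _

theorem japaneseBracket_div_le_one {v w : E} (h : japaneseBracket v ≤ ‖w‖) :
    japaneseBracket v / japaneseBracket w ≤ 1 :=
  (div_le_one (japaneseBracket_pos w)).2 (h.trans (norm_le_japaneseBracket w))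

theorem continuous_japaneseBracket : Continuous (japaneseBracket : E → ℝ) := by
  unfold japaneseBracket
  fun_prop

variable [NormedSpace ℝ E]

theorem continuous_japaneseBracket_sub_smul_rpow (a : ℝ) (η ξ : E) :
    Continuous fun τ : ℝ ↦ japaneseBracket (ξ - τ • η) ^ a :=
  (continuous_japaneseBracket.comp (by fun_prop)).rpow_const fun _ ↦
    .inl (japaneseBracket_pos _).ne'

end JapaneseBracket

section SegmentIntegrals

variable {E : Type*} [NormedAddCommGroup E] {a r L τ : ℝ} {η ξ : E}

/-- The size of the segment `ξ - [0, L] η`: for `0 ≤ L`, the largest distance from `0` to a point of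
the segment is comparable to this number. -/
noncomputable def segmentScale (L : ℝ) (η ξ : E) : ℝ :=
  max ‖ξ‖ (L * ‖η‖)

theorem segmentScale_nonneg : 0 ≤ segmentScale L η ξ :=
  (norm_nonneg ξ).trans (le_max_left _ _)

variable [NormedSpace ℝ E]

/-- The integral `∫₀^L ⟨ξ - τη⟩^a dτ` of a power of the Japanese bracket along the segment
`ξ - [0, L] η`. -/
noncomputable def bracketIntegral (a L : ℝ) (η ξ : E) : ℝ :=
  ∫ τ in (0 : ℝ)..L, japaneseBracket (ξ - τ • η) ^ a

theorem bracketIntegral_nonneg (hL : 0 ≤ L) : 0 ≤ bracketIntegral a L η ξ :=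
  intervalIntegral.integral_nonneg hL fun _ _ ↦ Real.rpow_nonneg (japaneseBracket_pos _).le _

theorem one_add_mul_bracketIntegral_pos {δ : ℝ} (hδ : 0 ≤ δ) (hL : 0 ≤ L) :
    0 < 1 + δ * bracketIntegral a L η ξ :=
  add_pos_of_pos_of_nonneg one_pos (mul_nonneg hδ (bracketIntegral_nonneg hL))

theorem norm_sub_smul_le_two_mul_segmentScale (hτ : τ ∈ Icc 0 L) :
    ‖ξ - τ • η‖ ≤ 2 * segmentScale L η ξ :=
  calc ‖ξ - τ • η‖ ≤ ‖ξ‖ + τ * ‖η‖ := by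
        simpa only [norm_smul, Real.norm_of_nonneg hτ.1] using norm_sub_le ξ (τ • η)
    _ ≤ ‖ξ‖ + L * ‖η‖ := by gcongr; exact hτ.2
    _ ≤ 2 * segmentScale L η ξ := by
        rw [two_mul]; exact add_le_add (le_max_left _ _) (le_max_right _ _)

theorem exists_segmentScale_mul_abs_sub_le (hL : 0 ≤ L) (η ξ : E) :
    ∃ c ∈ Icc 0 L, ∀ τ ∈ Icc 0 L, segmentScale L η ξ * |τ - c| ≤ L * ‖ξ - τ • η‖ := by
  have hnorm : ∀ τ ∈ Icc 0 L, |‖ξ‖ - τ * ‖η‖| ≤ ‖ξ - τ • η‖ := fun τ hτ ↦ by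
    simpa only [norm_smul, Real.norm_of_nonneg hτ.1] using abs_norm_sub_norm_le ξ (τ • η)
  rcases le_total (L * ‖η‖) ‖ξ‖ with h | h
  · refine ⟨L, right_mem_Icc.2 hL, fun τ hτ ↦ ?_⟩
    rw [segmentScale, max_eq_left h, abs_of_nonpos (sub_nonpos.2 hτ.2)]
    calc ‖ξ‖ * -(τ - L) = L * ‖ξ‖ - τ * ‖ξ‖ := by ring
      _ ≤ L * ‖ξ‖ - τ * (L * ‖η‖) := by gcongr; exact hτ.1
      _ = L * (‖ξ‖ - τ * ‖η‖) := by ring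
      _ ≤ L * ‖ξ - τ • η‖ := by gcongr; exact (le_abs_self _).trans (hnorm τ hτ)
  · have hcancel : ‖ξ‖ / ‖η‖ * ‖η‖ = ‖ξ‖ := div_mul_cancel_of_imp fun hη ↦ by
      rw [hη, mul_zero] at h
      exact h.antisymm (norm_nonneg ξ)
    refine ⟨‖ξ‖ / ‖η‖, ⟨by positivity, div_le_of_le_mul₀ (norm_nonneg η) hL h⟩, fun τ hτ ↦ ?_⟩
    rw [segmentScale, max_eq_right h]
    calc L * ‖η‖ * |τ - ‖ξ‖ / ‖η‖| = L * |‖ξ‖ - τ * ‖η‖| := by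
          rw [mul_assoc, mul_comm ‖η‖, ← abs_norm η, ← abs_mul, sub_mul, abs_norm, hcancel,
            abs_sub_comm]
      _ ≤ L * ‖ξ - τ • η‖ := by gcongr; exact hnorm τ hτ

theorem exists_segmentScale_div_mul_abs_sub_le (hL : 0 < L) (η ξ : E) :
    ∃ c ∈ Icc 0 L, ∀ τ ∈ Icc 0 L,
      segmentScale L η ξ / L * |τ - c| ≤ japaneseBracket (ξ - τ • η) := by
  obtain ⟨c, hc, hbound⟩ := exists_segmentScale_mul_abs_sub_le hL.le η ξ
  refine ⟨c, hc, fun τ hτ ↦ le_trans ?_ (norm_le_japaneseBracket _)⟩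
  rw [div_mul_eq_mul_div, div_le_iff₀' hL]
  exact hbound τ hτ

theorem mul_segmentScale_rpow_le (ha : 0 ≤ a) (hL : 0 ≤ L) (η ξ : E) :
    L * segmentScale L η ξ ^ a ≤ 2 ^ (a + 1) * (a + 1) * bracketIntegral a L η ξ := by
  rcases hL.eq_or_lt with rfl | hL
  · simp [bracketIntegral]
  obtain ⟨c, hc, hbound⟩ := exists_segmentScale_div_mul_abs_sub_le hL η ξ
  have hN : 0 ≤ segmentScale L η ξ := segmentScale_nonneg
  have hlower : (segmentScale L η ξ / L) ^ a * ∫ τ in (0 : ℝ)..L, |τ - c| ^ a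
      ≤ bracketIntegral a L η ξ := by
    rw [← intervalIntegral.integral_const_mul]
    refine intervalIntegral.integral_mono_on hL.le
      ((intervalIntegrable_abs_sub_rpow (by linarith) hc).const_mul _)
      ((continuous_japaneseBracket_sub_smul_rpow a η ξ).intervalIntegrable _ _) fun τ hτ ↦ ?_
    rw [← Real.mul_rpow (by positivity) (abs_nonneg _)]
    exact Real.rpow_le_rpow (by positivity) (hbound τ hτ) ha
  calc L * segmentScale L η ξ ^ a
      = 2 ^ (a + 1) * (a + 1) *
          ((segmentScale L η ξ / L) ^ a * (((L - 0) / 2) ^ (a + 1) / (a + 1))) := by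
        rw [sub_zero, Real.div_rpow hN hL.le, Real.div_rpow hL.le two_pos.le,
          Real.rpow_add_one hL.ne']
        field_simp
    _ ≤ 2 ^ (a + 1) * (a + 1) * bracketIntegral a L η ξ := by
        gcongr
        exact le_trans (by gcongr; exact le_integral_abs_sub_rpow ha hc) hlower

theorem bracketIntegral_le_of_nonpos (hr : -1 < r) (hr' : r ≤ 0) (hL : 0 ≤ L)
    (hN : 0 < segmentScale L η ξ) :
    bracketIntegral r L η ξ ≤ 2 / (r + 1) * (L * segmentScale L η ξ ^ r) := by
  rcases hL.eq_or_lt with rfl | hL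
  · simp [bracketIntegral]
  obtain ⟨c, hc, hbound⟩ := exists_segmentScale_div_mul_abs_sub_le hL η ξ
  have hupper : bracketIntegral r L η ξ
      ≤ (segmentScale L η ξ / L) ^ r * ∫ τ in (0 : ℝ)..L, |τ - c| ^ r := by
    rw [← intervalIntegral.integral_const_mul]
    refine intervalIntegral.integral_mono_ae_restrict hL.le
      ((continuous_japaneseBracket_sub_smul_rpow r η ξ).intervalIntegrable _ _)
      ((intervalIntegrable_abs_sub_rpow hr hc).const_mul _) ?_
    -- For `r < 0` the bound fails at `τ = c`, where `|τ - c| ^ r` is `0` by convention.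
    filter_upwards [ae_restrict_mem measurableSet_Icc, ae_restrict_of_ae (volume.ae_ne c)]
      with τ hτ hτc
    have : 0 < |τ - c| := abs_pos.2 (sub_ne_zero.2 hτc)
    rw [← Real.mul_rpow (by positivity) (abs_nonneg _)]
    exact Real.rpow_le_rpow_of_nonpos (by positivity) (hbound τ hτ) hr'
  calc bracketIntegral r L η ξ
      ≤ (segmentScale L η ξ / L) ^ r * (2 / (r + 1) * (L - 0) ^ (r + 1)) :=
        hupper.trans (by gcongr; exact integral_abs_sub_rpow_le hr hc)
    _ = 2 / (r + 1) * (L * segmentScale L η ξ ^ r) := by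
        rw [sub_zero, Real.div_rpow hN.le hL.le, Real.rpow_add_one hL.ne']
        field_simp

end SegmentIntegrals

section Translation

variable {E : Type*} [NormedAddCommGroup E] [NormedSpace ℝ E] {a b L : ℝ} {η ξ ζ : E}

theorem abs_bracketIntegral_sub_le_bracketIntegral (ha : 0 ≤ a) (hba : b ≤ a) (hb : b ≤ 1)
    (hL : 0 ≤ L) (hζ : 1 + ‖ζ‖ ≤ segmentScale L η ξ) :
    |bracketIntegral a L η (ξ - ζ) - bracketIntegral a L η ξ|
      ≤ max 1 a * ‖ζ‖ * ((3 * segmentScale L η ξ) ^ (a - b) * bracketIntegral (b - 1) L η ξ) := by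
  have hcont (e : ℝ) (v : E) := continuous_japaneseBracket_sub_smul_rpow e η v
  have hpoint : ∀ τ ∈ Icc 0 L,
      |japaneseBracket (ξ - ζ - τ • η) ^ a - japaneseBracket (ξ - τ • η) ^ a|
        ≤ max 1 a * ‖ζ‖ *
          ((3 * segmentScale L η ξ) ^ (a - b) * japaneseBracket (ξ - τ • η) ^ (b - 1)) := by
    intro τ hτ
    have hlip : |japaneseBracket (ξ - ζ - τ • η) - japaneseBracket (ξ - τ • η)| ≤ ‖ζ‖ := by
      simpa [sub_sub_sub_cancel_right] using
        abs_japaneseBracket_sub_le (ξ - ζ - τ • η) (ξ - τ • η)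
    have hsize : japaneseBracket (ξ - τ • η) + ‖ζ‖ ≤ 3 * segmentScale L η ξ := by
      linarith [japaneseBracket_le (ξ - τ • η),
        norm_sub_smul_le_two_mul_segmentScale (η := η) (ξ := ξ) hτ]
    refine (abs_rpow_sub_rpow_le_of_le (Z := 3 * segmentScale L η ξ) ha hba hb
      (japaneseBracket_pos _) (japaneseBracket_pos _) ?_ ?_).trans ?_
    · linarith [(abs_le.1 hlip).2]
    · linarith [norm_nonneg ζ]
    · have := japaneseBracket_pos (ξ - τ • η)
      have := segmentScale_nonneg (L := L) (η := η) (ξ := ξ)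
      gcongr
  simp only [bracketIntegral]
  rw [← intervalIntegral.integral_sub ((hcont a _).intervalIntegrable _ _)
      ((hcont a _).intervalIntegrable _ _),
    ← intervalIntegral.integral_const_mul, ← intervalIntegral.integral_const_mul]
  refine (intervalIntegral.abs_integral_le_integral_abs hL).trans ?_
  exact intervalIntegral.integral_mono_on hL
    (((hcont a _).sub (hcont a _)).abs.intervalIntegrable _ _)
    ((((hcont (b - 1) _).const_mul _).const_mul _).intervalIntegrable _ _) hpoint

theorem exists_abs_bracketIntegral_sub_le_segmentScale (ha : 0 < a) :
    ∃ C > 0, ∀ L : ℝ, 0 ≤ L → ∀ η ξ ζ : E, 1 + ‖ζ‖ ≤ segmentScale L η ξ →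
      |bracketIntegral a L η (ξ - ζ) - bracketIntegral a L η ξ|
        ≤ C * (‖ζ‖ * (L * segmentScale L η ξ ^ (a - 1))) := by
  set b := min a 1
  have hb : 0 < b := lt_min ha one_pos
  have hb1 : b ≤ 1 := min_le_right a 1
  refine ⟨max 1 a * 3 ^ (a - b) * (2 / b), by positivity, fun L hL η ξ ζ hζ ↦ ?_⟩
  set N := segmentScale L η ξ
  have hN : 0 < N := by linarith [norm_nonneg ζ]
  have hsingular : bracketIntegral (b - 1) L η ξ ≤ 2 / b * (L * N ^ (b - 1)) := by
    simpa only [sub_add_cancel] using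
      bracketIntegral_le_of_nonpos (r := b - 1) (by linarith) (by linarith) hL hN
  calc |bracketIntegral a L η (ξ - ζ) - bracketIntegral a L η ξ|
      ≤ max 1 a * ‖ζ‖ * ((3 * N) ^ (a - b) * bracketIntegral (b - 1) L η ξ) :=
        abs_bracketIntegral_sub_le_bracketIntegral ha.le (min_le_left a 1) hb1 hL hζ
    _ ≤ max 1 a * ‖ζ‖ * ((3 * N) ^ (a - b) * (2 / b * (L * N ^ (b - 1)))) := by gcongr
    _ = max 1 a * 3 ^ (a - b) * (2 / b) * (‖ζ‖ * (L * (N ^ (a - b) * N ^ (b - 1)))) := by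
        rw [Real.mul_rpow (by norm_num) hN.le]; ring
    _ = max 1 a * 3 ^ (a - b) * (2 / b) * (‖ζ‖ * (L * N ^ (a - 1))) := by
        rw [← Real.rpow_add hN, sub_add_sub_cancel]

theorem exists_abs_bracketIntegral_sub_le (ha : 0 < a) :
    ∃ K > 0, ∀ L : ℝ, 0 ≤ L → ∀ η ξ ζ : E, japaneseBracket ζ ≤ ‖ξ‖ / 2 →
      |bracketIntegral a L η (ξ - ζ) - bracketIntegral a L η ξ|
        ≤ K * (japaneseBracket ζ / japaneseBracket ξ) * bracketIntegral a L η ξ := by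
  obtain ⟨C, hC, hdiff⟩ := exists_abs_bracketIntegral_sub_le_segmentScale (E := E) ha
  refine ⟨C * 2 * (2 ^ (a + 1) * (a + 1)), by positivity, fun L hL η ξ ζ hζ ↦ ?_⟩
  have hζ1 := one_le_japaneseBracket ζ
  have hζn := norm_le_japaneseBracket ζ
  have hξ := japaneseBracket_pos ξ
  set N := segmentScale L η ξ
  have hξN : ‖ξ‖ ≤ N := le_max_left _ _
  have hN : 0 < N := by linarith
  have hbracket : japaneseBracket ξ ≤ 2 * N := by linarith [japaneseBracket_le ξ]
  have hinv : N⁻¹ ≤ 2 / japaneseBracket ξ := by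
    rw [inv_le_comm₀ hN (by positivity), inv_div]
    linarith
  calc |bracketIntegral a L η (ξ - ζ) - bracketIntegral a L η ξ|
      ≤ C * (‖ζ‖ * (L * N ^ (a - 1))) := hdiff L hL η ξ ζ (by linarith)
    _ = C * (‖ζ‖ * N⁻¹ * (L * N ^ a)) := by rw [Real.rpow_sub_one hN.ne']; ring
    _ ≤ C * (japaneseBracket ζ * (2 / japaneseBracket ξ) *
          (2 ^ (a + 1) * (a + 1) * bracketIntegral a L η ξ)) := by
        gcongr C * (?_ * ?_ * ?_)
        exact mul_segmentScale_rpow_le ha.le hL η ξ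
    _ = C * 2 * (2 ^ (a + 1) * (a + 1)) * (japaneseBracket ζ / japaneseBracket ξ) *
          bracketIntegral a L η ξ := by ring

/-- The symbol `(1 + δ ∫₀^L ⟨ξ - τη⟩^a dτ)^r`; the symbol `M(t, ξ)` is the case `a = 2s`,
`r = -1/2 - ε`, `L = T - t`. -/
noncomputable def bracketSymbol (a r δ L : ℝ) (η ξ : E) : ℝ :=
  (1 + δ * bracketIntegral a L η ξ) ^ r

theorem exists_abs_bracketSymbol_sub_le {r : ℝ} (ha : 0 < a) (hr : r ≤ 0) :
    ∃ C > 0, ∀ δ L : ℝ, 0 ≤ δ → 0 ≤ L → ∀ η ξ ζ : E, japaneseBracket ζ ≤ ‖ξ‖ / 2 →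
      |bracketSymbol a r δ L η ξ - bracketSymbol a r δ L η (ξ - ζ)|
        ≤ C * (japaneseBracket ζ / japaneseBracket ξ) * bracketSymbol a r δ L η (ξ - ζ) := by
  obtain ⟨K, hK, hdiff⟩ := exists_abs_bracketIntegral_sub_le (E := E) ha
  refine ⟨max 1 (-r) * (1 + K) ^ (-r) * K, by positivity, fun δ L hδ hL η ξ ζ hζ ↦ ?_⟩
  have hratio : japaneseBracket ζ / japaneseBracket ξ ≤ 1 :=
    japaneseBracket_div_le_one (by linarith [norm_nonneg ξ])
  have hX : 0 < 1 + δ * bracketIntegral a L η ξ := one_add_mul_bracketIntegral_pos hδ hL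
  have hY : 0 < 1 + δ * bracketIntegral a L η (ξ - ζ) := one_add_mul_bracketIntegral_pos hδ hL
  simp only [bracketSymbol]
  set ρ := japaneseBracket ζ / japaneseBracket ξ
  have hρ : 0 ≤ ρ := div_nonneg (japaneseBracket_pos ζ).le (japaneseBracket_pos ξ).le
  set X := 1 + δ * bracketIntegral a L η ξ with hX_def
  set Y := 1 + δ * bracketIntegral a L η (ξ - ζ) with hY_def
  have hYX : |Y - X| ≤ K * ρ * X :=
    calc |Y - X| = δ * |bracketIntegral a L η (ξ - ζ) - bracketIntegral a L η ξ| := by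
          rw [hX_def, hY_def, add_sub_add_left_eq_sub, ← mul_sub, abs_mul, abs_of_nonneg hδ]
      _ ≤ δ * (K * ρ * bracketIntegral a L η ξ) := by gcongr; exact hdiff L hL η ξ ζ hζ
      _ = K * ρ * (X - 1) := by rw [hX_def]; ring
      _ ≤ K * ρ * X := by gcongr; linarith
  have hY_le : Y ≤ (1 + K) * X := by
    have : K * ρ * X ≤ K * 1 * X := by gcongr
    linarith [le_abs_self (Y - X)]
  calc |X ^ r - Y ^ r| ≤ max 1 (-r) * (1 + K) ^ (-r) * (|Y - X| / X) * Y ^ r := by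
        simpa only [neg_neg] using
          abs_rpow_neg_sub_rpow_neg_le (neg_nonneg.2 hr) hX hY (by linarith) hY_le
    _ ≤ max 1 (-r) * (1 + K) ^ (-r) * (K * ρ) * Y ^ r := by
        gcongr
        exact (div_le_iff₀ hX).2 hYX
    _ = max 1 (-r) * (1 + K) ^ (-r) * K * ρ * Y ^ r := by ring

theorem stmt19_general {r : ℝ} (ha : 0 < a) (hr : r ≤ 0) :
    ∃ C > 0, ∀ κ ≤ (1 : ℝ), ∀ δ L : ℝ, 0 ≤ δ → 0 ≤ L → ∀ η ξ ζ : E,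
      japaneseBracket ζ ≤ ‖ξ‖ / 2 →
        |bracketSymbol a r δ L η ξ - bracketSymbol a r δ L η (ξ - ζ)|
          ≤ C * (japaneseBracket ζ / japaneseBracket ξ) ^ κ *
            bracketSymbol a r δ L η (ξ - ζ) := by
  obtain ⟨C, hC, hbound⟩ := exists_abs_bracketSymbol_sub_le (E := E) ha hr
  refine ⟨C, hC, fun κ hκ δ L hδ hL η ξ ζ hζ ↦ (hbound δ L hδ hL η ξ ζ hζ).trans ?_⟩
  have hsymbol : 0 ≤ bracketSymbol a r δ L η (ξ - ζ) :=
    Real.rpow_nonneg (one_add_mul_bracketIntegral_pos hδ hL).le r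
  have hratio_pos : 0 < japaneseBracket ζ / japaneseBracket ξ :=
    div_pos (japaneseBracket_pos ζ) (japaneseBracket_pos ξ)
  have hratio_le : japaneseBracket ζ / japaneseBracket ξ ≤ 1 :=
    japaneseBracket_div_le_one (by linarith [norm_nonneg ξ])
  gcongr
  simpa only [Real.rpow_one] using Real.rpow_le_rpow_of_exponent_ge hratio_pos hratio_le hκ

end Translation

theorem stmt19 (s ε : ℝ) (hs : s ∈ Set.Ioo (0 : ℝ) 1) (hε : 0 < ε) :
    ∃ C : ℝ, 0 < C ∧ ∀ κ ∈ Set.Icc (0 : ℝ) 1, ∀ δ T : ℝ, 0 < δ → 0 < T →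
      ∀ η : EuclideanSpace ℝ (Fin 3), ∀ t ∈ Set.Icc (0 : ℝ) T,
        ∀ ξ ξs : EuclideanSpace ℝ (Fin 3),
          Real.sqrt (1 + ‖ξs‖ ^ 2) ≤ ‖ξ‖ / 2 →
          |symbM s ε δ T η t ξ - symbM s ε δ T η t (ξ - ξs)|
            ≤ C * (Real.sqrt (1 + ‖ξs‖ ^ 2) / Real.sqrt (1 + ‖ξ‖ ^ 2)) ^ κ
                * symbM s ε δ T η t (ξ - ξs) := by
  obtain ⟨C, hC, hbound⟩ := stmt19_general (E := EuclideanSpace ℝ (Fin 3))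
    (mul_pos two_pos hs.1) (by linarith : -(1 / 2 : ℝ) - ε ≤ 0)
  exact ⟨C, hC, fun κ hκ δ T hδ _ η t ht ↦ hbound κ hκ.2 δ (T - t) hδ.le (sub_nonneg.2 ht.2) η⟩
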